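/- The max-relative entropy of bidirectional classical communication is bounded below by minus the bipartite conditional min-entropies: let J, indexed by A₀ × A₁ × B₀ × B₁, be the Choi matrix of a bipartite channel. Then Λ(J) ≥ μ(Tr_{A₁} J) and Λ(J) ≥ μ'(Tr_{B₁} J). Concretely, whenever (λ, Y) is feasible for Λ(J), the matrix X := (1/|A₀|) • Tr_{A₀A₁} Y satisfies Tr_{B₁} X = λ • I_{B₀} and Tr_{A₁} J ≤ I_{A₀} ⊗ X, and symmetrically for μ'. (This is the key inequality 𝔇_max^↔(N) ≥ max{−H_min(𝐀|𝐁)_N, −H_min(𝐁|𝐀)_N} underlying the lower bound on the asymptotic exact bidirectional classical communication cost.) -/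

import Mathlib

open Matrix
open scoped ComplexOrder

noncomputable section

/-- Loewner order on complex matrices: `M ≤ N` iff `N - M` is positive semidefinite. -/
def LoewnerLE {n : Type*} [Fintype n] (M N : Matrix n n ℂ) : Prop := (N - M).PosSemidef

/-- `π_S ⊗ X`, the maximally mixed state on `S` tensored with `X`. -/
def piFst {S T : Type*} [Fintype S] [DecidableEq S] (X : Matrix T T ℂ) :
    Matrix (S × T) (S × T) ℂ :=
  fun x y => ((Fintype.card S : ℂ))⁻¹ * (if x.1 = y.1 then 1 else 0) * X x.2 y.2

/-- `I_S ⊗ X`, the identity on `S` tensored with `X`. -/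
def idFst {S T : Type*} [DecidableEq S] (X : Matrix T T ℂ) :
    Matrix (S × T) (S × T) ℂ :=
  fun x y => (if x.1 = y.1 then 1 else 0) * X x.2 y.2

/-- Partial trace over the second tensor factor. -/
def trOut {S T : Type*} [Fintype T] (X : Matrix (S × T) (S × T) ℂ) : Matrix S S ℂ :=
  fun s s' => ∑ t : T, X (s, t) (s', t)

/-- Partial trace over the first tensor factor. -/
def trInp {S T : Type*} [Fintype S] (X : Matrix (S × T) (S × T) ℂ) : Matrix T T ℂ :=
  fun t t' => ∑ s : S, X (s, t) (s, t')

section FourSystems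

variable {A₀ A₁ B₀ B₁ : Type*} [Fintype A₀] [Fintype A₁] [Fintype B₀] [Fintype B₁]
  [DecidableEq A₀] [DecidableEq A₁] [DecidableEq B₀] [DecidableEq B₁]

/-- `Tr_{A₁}` of a matrix on `A₀ × A₁ × B₀ × B₁`. -/
def trA1 (J : Matrix (A₀ × A₁ × B₀ × B₁) (A₀ × A₁ × B₀ × B₁) ℂ) :
    Matrix (A₀ × B₀ × B₁) (A₀ × B₀ × B₁) ℂ :=
  fun x y => ∑ a : A₁, J (x.1, a, x.2) (y.1, a, y.2)

/-- `Tr_{B₁}` of a matrix on `A₀ × A₁ × B₀ × B₁`. -/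
def trB1 (J : Matrix (A₀ × A₁ × B₀ × B₁) (A₀ × A₁ × B₀ × B₁) ℂ) :
    Matrix (A₀ × A₁ × B₀) (A₀ × A₁ × B₀) ℂ :=
  fun x y => ∑ b : B₁, J (x.1, x.2.1, x.2.2, b) (y.1, y.2.1, y.2.2, b)

/-- `Tr_{A₀A₁}` of a matrix on `A₀ × A₁ × B₀ × B₁`. -/
def trA0A1 (J : Matrix (A₀ × A₁ × B₀ × B₁) (A₀ × A₁ × B₀ × B₁) ℂ) :
    Matrix (B₀ × B₁) (B₀ × B₁) ℂ :=
  fun x y => ∑ a₀ : A₀, ∑ a₁ : A₁, J (a₀, a₁, x) (a₀, a₁, y)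

/-- `Tr_{B₀B₁}` of a matrix on `A₀ × A₁ × B₀ × B₁`. -/
def trB0B1 (J : Matrix (A₀ × A₁ × B₀ × B₁) (A₀ × A₁ × B₀ × B₁) ℂ) :
    Matrix (A₀ × A₁) (A₀ × A₁) ℂ :=
  fun x y => ∑ b₀ : B₀, ∑ b₁ : B₁, J (x.1, x.2, b₀, b₁) (y.1, y.2, b₀, b₁)

/-- `Tr_{A₁B₁}` of a matrix on `A₀ × A₁ × B₀ × B₁`. -/
def trA1B1 (J : Matrix (A₀ × A₁ × B₀ × B₁) (A₀ × A₁ × B₀ × B₁) ℂ) :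
    Matrix (A₀ × B₀) (A₀ × B₀) ℂ :=
  fun x y => ∑ a₁ : A₁, ∑ b₁ : B₁, J (x.1, a₁, x.2, b₁) (y.1, a₁, y.2, b₁)

/-- `π_{B₀} ⊗ Y`, reindexed to `A₀ × A₁ × B₀` with the subsystems in this order. -/
def piB0 (Y : Matrix (A₀ × A₁) (A₀ × A₁) ℂ) :
    Matrix (A₀ × A₁ × B₀) (A₀ × A₁ × B₀) ℂ :=
  fun x y => ((Fintype.card B₀ : ℂ))⁻¹ * (if x.2.2 = y.2.2 then 1 else 0) *
    Y (x.1, x.2.1) (y.1, y.2.1)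

/-- The non-signalling conditions for a Choi matrix on `A₀ × A₁ × B₀ × B₁`:
`Tr_{A₁} J = π_{A₀} ⊗ Tr_{A₀A₁} J` and `Tr_{B₁} J = π_{B₀} ⊗ Tr_{B₀B₁} J`. -/
def NS (J : Matrix (A₀ × A₁ × B₀ × B₁) (A₀ × A₁ × B₀ × B₁) ℂ) : Prop :=
  trA1 J = piFst (trA0A1 J) ∧ trB1 J = piB0 (trB0B1 J)

/-- The optimal value `Λ(J)` of the SDP whose logarithm is the max-relative entropy of
bidirectional classical communication of the bipartite channel with Choi matrix `J`. -/
def Lam (J : Matrix (A₀ × A₁ × B₀ × B₁) (A₀ × A₁ × B₀ × B₁) ℂ) : ℝ :=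
  sInf {l : ℝ | ∃ Y : Matrix (A₀ × A₁ × B₀ × B₁) (A₀ × A₁ × B₀ × B₁) ℂ,
    LoewnerLE J Y ∧ trA1B1 Y = l • (1 : Matrix (A₀ × B₀) (A₀ × B₀) ℂ) ∧ NS Y}

end FourSystems

/-- The optimal value `μ(K)` of the SDP whose negative logarithm is the bipartite
conditional min-entropy `H_min(𝐀|𝐁)` (for `K = Tr_{A₁} J` of a channel Choi matrix `J`). -/
def mu {A₀ B₀ B₁ : Type*} [Fintype A₀] [Fintype B₀] [Fintype B₁]
    [DecidableEq A₀] [DecidableEq B₀]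
    (K : Matrix (A₀ × B₀ × B₁) (A₀ × B₀ × B₁) ℂ) : ℝ :=
  sInf {m : ℝ | ∃ X : Matrix (B₀ × B₁) (B₀ × B₁) ℂ,
    trOut X = m • (1 : Matrix B₀ B₀ ℂ) ∧ LoewnerLE K (idFst X)}

/-- `Tr_{B₁}` of a matrix on `A₀ × B₀ × B₁`. -/
def trLast3 {A₀ B₀ B₁ : Type*} [Fintype B₁]
    (K : Matrix (A₀ × B₀ × B₁) (A₀ × B₀ × B₁) ℂ) : Matrix (A₀ × B₀) (A₀ × B₀) ℂ :=
  fun x y => ∑ b : B₁, K (x.1, x.2, b) (y.1, y.2, b)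

/-- Kronecker product of matrices on three-fold systems, reindexed to
`(A₀ × A₀') × (B₀ × B₀') × (B₁ × B₁')`. -/
def kron3 {A₀ B₀ B₁ A₀' B₀' B₁' : Type*}
    (K₁ : Matrix (A₀ × B₀ × B₁) (A₀ × B₀ × B₁) ℂ)
    (K₂ : Matrix (A₀' × B₀' × B₁') (A₀' × B₀' × B₁') ℂ) :
    Matrix ((A₀ × A₀') × (B₀ × B₀') × (B₁ × B₁'))
      ((A₀ × A₀') × (B₀ × B₀') × (B₁ × B₁')) ℂ :=
  fun x y =>
    K₁ (x.1.1, x.2.1.1, x.2.2.1) (y.1.1, y.2.1.1, y.2.2.1) *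
    K₂ (x.1.2, x.2.1.2, x.2.2.2) (y.1.2, y.2.1.2, y.2.2.2)

/-- `X ⊗ I_{B₀}` reindexed to `A₀ × A₁ × B₀`. -/
def tensIdB0 {A₀ A₁ B₀ : Type*} [DecidableEq B₀]
    (X : Matrix (A₀ × A₁) (A₀ × A₁) ℂ) : Matrix (A₀ × A₁ × B₀) (A₀ × A₁ × B₀) ℂ :=
  fun x y => X (x.1, x.2.1) (y.1, y.2.1) * (if x.2.2 = y.2.2 then 1 else 0)

/-- The optimal value `μ'(K')` of the SDP whose negative logarithm is the bipartite
conditional min-entropy `H_min(𝐁|𝐀)` (for `K' = Tr_{B₁} J` of a channel Choi matrix). -/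
def mu' {A₀ A₁ B₀ : Type*} [Fintype A₀] [Fintype A₁] [Fintype B₀]
    [DecidableEq A₀] [DecidableEq B₀]
    (K' : Matrix (A₀ × A₁ × B₀) (A₀ × A₁ × B₀) ℂ) : ℝ :=
  sInf {m : ℝ | ∃ X : Matrix (A₀ × A₁) (A₀ × A₁) ℂ,
    trOut X = m • (1 : Matrix A₀ A₀ ℂ) ∧ LoewnerLE K' (tensIdB0 X)}

section Helpers

variable {A₀ A₁ B₀ B₁ : Type*} [Fintype A₀] [Fintype A₁] [Fintype B₀] [Fintype B₁]
  [DecidableEq A₀] [DecidableEq A₁] [DecidableEq B₀] [DecidableEq B₁]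

theorem psd_trA1 {M : Matrix (A₀ × A₁ × B₀ × B₁) (A₀ × A₁ × B₀ × B₁) ℂ} (h : M.PosSemidef) :
    (trA1 M).PosSemidef := by
  have e : trA1 M = ∑ a : A₁, M.submatrix (fun x : A₀ × B₀ × B₁ => (x.1, a, x.2))
      (fun x : A₀ × B₀ × B₁ => (x.1, a, x.2)) := by
    ext x y
    simp [trA1, Matrix.sum_apply]
  rw [e]
  exact Matrix.posSemidef_sum _ fun a _ => h.submatrix _

theorem psd_trB1 {M : Matrix (A₀ × A₁ × B₀ × B₁) (A₀ × A₁ × B₀ × B₁) ℂ} (h : M.PosSemidef) :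
    (trB1 M).PosSemidef := by
  have e : trB1 M = ∑ b : B₁, M.submatrix (fun x : A₀ × A₁ × B₀ => (x.1, x.2.1, x.2.2, b))
      (fun x : A₀ × A₁ × B₀ => (x.1, x.2.1, x.2.2, b)) := by
    ext x y
    simp [trB1, Matrix.sum_apply]
  rw [e]
  exact Matrix.posSemidef_sum _ fun a _ => h.submatrix _

theorem trA1_sub (M N : Matrix (A₀ × A₁ × B₀ × B₁) (A₀ × A₁ × B₀ × B₁) ℂ) :
    trA1 (M - N) = trA1 M - trA1 N := by
  ext x y
  simp [trA1]

theorem trB1_sub (M N : Matrix (A₀ × A₁ × B₀ × B₁) (A₀ × A₁ × B₀ × B₁) ℂ) :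
    trB1 (M - N) = trB1 M - trB1 N := by
  ext x y
  simp [trB1]

theorem feas_mu [Nonempty A₀] {J Y : Matrix (A₀ × A₁ × B₀ × B₁) (A₀ × A₁ × B₀ × B₁) ℂ} {l : ℝ}
    (h1 : LoewnerLE J Y) (h2 : trA1B1 Y = l • (1 : Matrix (A₀ × B₀) (A₀ × B₀) ℂ)) (h3 : NS Y) :
    trOut ((Fintype.card A₀ : ℝ)⁻¹ • trA0A1 Y) = l • (1 : Matrix B₀ B₀ ℂ) ∧
        LoewnerLE (trA1 J) (idFst ((Fintype.card A₀ : ℝ)⁻¹ • trA0A1 Y)) := by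
  have hc : (Fintype.card A₀ : ℂ) ≠ 0 := by simp
  constructor
  · ext b b'
    have e : trOut ((Fintype.card A₀ : ℝ)⁻¹ • trA0A1 Y) b b' =
        (Fintype.card A₀ : ℂ)⁻¹ * ∑ a : A₀, trA1B1 Y (a, b) (a, b') := by
      simp only [trOut, trA0A1, trA1B1, Matrix.smul_apply, Complex.real_smul]
      rw [← Finset.mul_sum, Finset.sum_comm]
      push_cast
      congr 1
      refine Finset.sum_congr rfl fun a _ => ?_
      rw [Finset.sum_comm]
    rw [e, h2]
    by_cases hb : b = b'
    · subst hb
      simp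
    · simp [Matrix.one_apply, hb]
  · have e : idFst ((Fintype.card A₀ : ℝ)⁻¹ • trA0A1 Y) = trA1 Y := by
      rw [h3.1]
      ext x y
      simp only [idFst, piFst, Matrix.smul_apply, Complex.real_smul]
      push_cast
      ring
    unfold LoewnerLE at *
    rw [e, ← trA1_sub]
    exact psd_trA1 h1

theorem feas_mu' [Nonempty B₀] {J Y : Matrix (A₀ × A₁ × B₀ × B₁) (A₀ × A₁ × B₀ × B₁) ℂ} {l : ℝ}
    (h1 : LoewnerLE J Y) (h2 : trA1B1 Y = l • (1 : Matrix (A₀ × B₀) (A₀ × B₀) ℂ)) (h3 : NS Y) :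
    trOut ((Fintype.card B₀ : ℝ)⁻¹ • trB0B1 Y) = l • (1 : Matrix A₀ A₀ ℂ) ∧
        LoewnerLE (trB1 J) (tensIdB0 ((Fintype.card B₀ : ℝ)⁻¹ • trB0B1 Y)) := by
  have hc : (Fintype.card B₀ : ℂ) ≠ 0 := by simp
  constructor
  · ext b b'
    have e : trOut ((Fintype.card B₀ : ℝ)⁻¹ • trB0B1 Y) b b' =
        (Fintype.card B₀ : ℂ)⁻¹ * ∑ a : B₀, trA1B1 Y (b, a) (b', a) := by
      simp only [trOut, trB0B1, trA1B1, Matrix.smul_apply, Complex.real_smul]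
      rw [← Finset.mul_sum, Finset.sum_comm]
      push_cast
      rfl
    rw [e, h2]
    by_cases hb : b = b'
    · subst hb
      simp
    · simp [Matrix.one_apply, hb]
  · have e : tensIdB0 ((Fintype.card B₀ : ℝ)⁻¹ • trB0B1 Y) = trB1 Y := by
      rw [h3.2]
      ext x y
      simp only [tensIdB0, piB0, Matrix.smul_apply, Complex.real_smul]
      push_cast
      ring
    unfold LoewnerLE at *
    rw [e, ← trB1_sub]
    exact psd_trB1 h1

theorem exists_le_smul_one {n : Type*} [Fintype n] [DecidableEq n] {J : Matrix n n ℂ}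
    (h : J.PosSemidef) : ∃ c : ℝ, LoewnerLE J (c • (1 : Matrix n n ℂ)) := by
  open scoped Matrix.Norms.L2Operator MatrixOrder in
  refine ⟨‖J‖, ?_⟩
  have := IsSelfAdjoint.le_algebraMap_norm_self (a := J) h.isHermitian
  rw [Matrix.le_iff, Algebra.algebraMap_eq_smul_one] at this
  exact this

theorem Lam_nonempty [Nonempty A₀] [Nonempty B₀]
    {J : Matrix (A₀ × A₁ × B₀ × B₁) (A₀ × A₁ × B₀ × B₁) ℂ} (h : J.PosSemidef) :
    {l : ℝ | ∃ Y : Matrix (A₀ × A₁ × B₀ × B₁) (A₀ × A₁ × B₀ × B₁) ℂ,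
    LoewnerLE J Y ∧ trA1B1 Y = l • (1 : Matrix (A₀ × B₀) (A₀ × B₀) ℂ) ∧ NS Y}.Nonempty := by
  obtain ⟨c, hc⟩ := exists_le_smul_one h
  have hA : (Fintype.card A₀ : ℂ) ≠ 0 := by simp
  have hB : (Fintype.card B₀ : ℂ) ≠ 0 := by simp
  refine ⟨Fintype.card A₁ * Fintype.card B₁ * c, c • 1, hc, ?_, ?_, ?_⟩
  · ext ⟨a, b⟩ ⟨a', b'⟩
    by_cases h1 : a = a' <;> by_cases h2 : b = b' <;>
      simp [trA1B1, Matrix.one_apply, h1, h2, mul_assoc]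
  · ext ⟨a, b, d⟩ ⟨a', b', d'⟩
    by_cases h1 : a = a' <;> by_cases h2 : b = b' <;> by_cases h3 : d = d' <;>
      simp [trA1, piFst, trA0A1, Matrix.one_apply, h1, h2, h3]
  · ext ⟨a, b, d⟩ ⟨a', b', d'⟩
    by_cases h1 : a = a' <;> by_cases h2 : b = b' <;> by_cases h3 : d = d' <;>
      simp [trB1, piB0, trB0B1, Matrix.one_apply, h1, h2, h3]

theorem mu_nonneg [Nonempty A₀] [Nonempty B₀] {K : Matrix (A₀ × B₀ × B₁) (A₀ × B₀ × B₁) ℂ}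
    (hK : K.PosSemidef) {m : ℝ} {X : Matrix (B₀ × B₁) (B₀ × B₁) ℂ}
    (h1 : trOut X = m • (1 : Matrix B₀ B₀ ℂ)) (h2 : LoewnerLE K (idFst X)) : 0 ≤ m := by
  have hp : (idFst X : Matrix (A₀ × B₀ × B₁) (A₀ × B₀ × B₁) ℂ).PosSemidef := by
    have := hK.add h2
    simpa using this
  obtain ⟨a⟩ := ‹Nonempty A₀›
  obtain ⟨b⟩ := ‹Nonempty B₀›
  have hs : 0 ≤ ∑ t : B₁, X (b, t) (b, t) := Finset.sum_nonneg fun t _ => by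
    simpa [idFst] using hp.diag_nonneg (i := (a, b, t))
  have := congrFun (congrFun h1 b) b
  simp only [trOut] at this
  rw [this] at hs
  simpa using hs

theorem mu'_nonneg [Nonempty A₀] [Nonempty B₀] {K : Matrix (A₀ × A₁ × B₀) (A₀ × A₁ × B₀) ℂ}
    (hK : K.PosSemidef) {m : ℝ} {X : Matrix (A₀ × A₁) (A₀ × A₁) ℂ}
    (h1 : trOut X = m • (1 : Matrix A₀ A₀ ℂ)) (h2 : LoewnerLE K (tensIdB0 X)) : 0 ≤ m := by
  have hp : (tensIdB0 X : Matrix (A₀ × A₁ × B₀) (A₀ × A₁ × B₀) ℂ).PosSemidef := by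
    have := hK.add h2
    simpa using this
  obtain ⟨a⟩ := ‹Nonempty A₀›
  obtain ⟨b⟩ := ‹Nonempty B₀›
  have hs : 0 ≤ ∑ t : A₁, X (a, t) (a, t) := Finset.sum_nonneg fun t _ => by
    simpa [tensIdB0] using hp.diag_nonneg (i := (a, t, b))
  have := congrFun (congrFun h1 a) a
  simp only [trOut] at this
  rw [this] at hs
  simpa using hs

end Helpers

/-- The max-relative entropy of bidirectional classical communication is bounded below by
minus the bipartite conditional min-entropies: every feasible `(λ, Y)` for `Λ(J)` yields,
via `X := (1/|A₀|) • Tr_{A₀A₁} Y`, a feasible point for `μ(Tr_{A₁} J)`, and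
`Λ(J) ≥ μ(Tr_{A₁} J)`, `Λ(J) ≥ μ'(Tr_{B₁} J)`. -/
theorem lam_ge_min_entropies
    {A₀ A₁ B₀ B₁ : Type*}
    [Fintype A₀] [Fintype A₁] [Fintype B₀] [Fintype B₁]
    [DecidableEq A₀] [DecidableEq A₁] [DecidableEq B₀] [DecidableEq B₁]
    [Nonempty A₀] [Nonempty A₁] [Nonempty B₀] [Nonempty B₁]
    (J : Matrix (A₀ × A₁ × B₀ × B₁) (A₀ × A₁ × B₀ × B₁) ℂ)
    (hJ : J.PosSemidef) (hTP : trA1B1 J = 1) :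
    (∀ (l : ℝ) (Y : Matrix (A₀ × A₁ × B₀ × B₁) (A₀ × A₁ × B₀ × B₁) ℂ),
      LoewnerLE J Y → trA1B1 Y = l • (1 : Matrix (A₀ × B₀) (A₀ × B₀) ℂ) → NS Y →
        trOut ((Fintype.card A₀ : ℝ)⁻¹ • trA0A1 Y) = l • (1 : Matrix B₀ B₀ ℂ) ∧
        LoewnerLE (trA1 J) (idFst ((Fintype.card A₀ : ℝ)⁻¹ • trA0A1 Y))) ∧
    mu (trA1 J) ≤ Lam J ∧ mu' (trB1 J) ≤ Lam J := by
  refine ⟨fun l Y h1 h2 h3 => feas_mu h1 h2 h3, ?_, ?_⟩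
  · refine le_csInf (Lam_nonempty hJ) ?_
    rintro l ⟨Y, h1, h2, h3⟩
    refine csInf_le ⟨0, ?_⟩ ⟨_, feas_mu h1 h2 h3⟩
    rintro m ⟨X, hX, hX'⟩
    exact mu_nonneg (psd_trA1 hJ) hX hX'
  · refine le_csInf (Lam_nonempty hJ) ?_
    rintro l ⟨Y, h1, h2, h3⟩
    refine csInf_le ⟨0, ?_⟩ ⟨_, feas_mu' h1 h2 h3⟩
    rintro m ⟨X, hX, hX'⟩
    exact mu'_nonneg (psd_trB1 hJ) hX hX'
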